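/- arXiv:1407.4999 — 2 statements merged into one kernel-verified Lean document; each statement's English description precedes it below -/
import Mathlib

section
/- Every finite simple graph on n vertices with minimum degree at least 3 contains a cycle of length at most 2·⌈log₂ n⌉. -/
/-!
Grow the paths issuing from a fixed vertex `v`. If no cycle has length at most `2 * k`, where
`k = ⌈log₂ n⌉`, then two distinct paths with common endpoints have total length more than `2 * k`
(`exists_isCycle_of_ne`). Hence a path of length `j < k` extends to a path of length `j + 1` along
every edge at its end except the one it arrived by, so in at least two ways, and a vertex is the
end of at most one path of length `j + 1`, so it arises from only one shorter path. The number of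
ends therefore at least doubles with each step (`two_pow_le_card_pathEnds`), and there are at
least `2 ^ k` ends of paths of length `k`. None of them is `v`, so `n ≥ 2 ^ k + 1`, which
contradicts `n ≤ 2 ^ k`.
-/

open SimpleGraph

/-- The subgraph formed by the edges of two distinct paths with common endpoints is not acyclic,
and a cycle in it uses each of these edges at most once. -/
lemma exists_isCycle_of_ne {V : Type*} {G : SimpleGraph V} {u w : V} {p q : G.Walk u w}
    (hp : p.IsPath) (hq : q.IsPath) (hne : p ≠ q) :
    ∃ (v : V) (c : G.Walk v v), c.IsCycle ∧ c.length ≤ p.length + q.length := by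
  classical
  set H : SimpleGraph V := fromEdgeSet {e | e ∈ p.edges ++ q.edges} with hH
  have hHe : ∀ e ∈ H.edgeSet, e ∈ p.edges ++ q.edges := by
    intro e he
    rw [hH, edgeSet_fromEdgeSet] at he
    exact he.1
  have hHG : H ≤ G := by
    rw [← edgeSet_subset_edgeSet]
    intro e he
    rcases List.mem_append.1 (hHe e he) with h | h
    · exact p.edges_subset_edgeSet h
    · exact q.edges_subset_edgeSet h
  have hpH : ∀ e ∈ p.edges, e ∈ H.edgeSet := by
    intro e he
    rw [hH, edgeSet_fromEdgeSet]
    exact ⟨List.mem_append_left _ he, G.not_isDiag_of_mem_edgeSet (p.edges_subset_edgeSet he)⟩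
  have hqH : ∀ e ∈ q.edges, e ∈ H.edgeSet := by
    intro e he
    rw [hH, edgeSet_fromEdgeSet]
    exact ⟨List.mem_append_right _ he, G.not_isDiag_of_mem_edgeSet (q.edges_subset_edgeSet he)⟩
  have hcyc : ¬ H.IsAcyclic := by
    intro hac
    have h := hac.subsingleton_path u w
    have h1 := congrArg Subtype.val
      (Subsingleton.elim (⟨p.transfer H hpH, hp.transfer hpH⟩ : H.Path u w)
        ⟨q.transfer H hqH, hq.transfer hqH⟩)
    apply hne
    apply Walk.ext_support
    simpa using congrArg Walk.support h1
  simp only [IsAcyclic, not_forall, not_not] at hcyc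
  obtain ⟨x, c, hc⟩ := hcyc
  refine ⟨x, c.mapLe hHG, hc.mapLe hHG, ?_⟩
  have hsub : c.edges ⊆ p.edges ++ q.edges := fun e he => hHe e (c.edges_subset_edgeSet he)
  have hlen := (hc.edges_nodup.subperm hsub).length_le
  simpa using hlen

/-- The vertices at which some path of length `j` from `v` ends. -/
noncomputable def pathEnds {V : Type*} [Fintype V] (G : SimpleGraph V) (v : V) (j : ℕ) :
    Finset V := by
  classical
  exact Finset.univ.filter fun w => ∃ p : G.Walk v w, p.IsPath ∧ p.length = j

lemma mem_pathEnds {V : Type*} [Fintype V] {G : SimpleGraph V} {v w : V} {j : ℕ} :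
    w ∈ pathEnds G v j ↔ ∃ p : G.Walk v w, p.IsPath ∧ p.length = j := by
  simp [pathEnds]

lemma two_pow_le_card_pathEnds {V : Type*} [Fintype V] [DecidableEq V]
    (G : SimpleGraph V) [DecidableRel G.Adj] (hdeg : ∀ v, 3 ≤ G.degree v) (k : ℕ)
    (hG : ∀ (v : V) (c : G.Walk v v), c.IsCycle → 2 * k < c.length) (v : V) :
    ∀ j ≤ k, 2 ^ j ≤ (pathEnds G v j).card := by
  classical
  have huniq : ∀ {u w : V} (p q : G.Walk u w), p.IsPath → q.IsPath →
      p.length + q.length ≤ 2 * k → p = q := by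
    intro u w p q hp hq hl
    by_contra hne
    obtain ⟨x, c, hc, hcl⟩ := exists_isCycle_of_ne hp hq hne
    have := hG x c hc
    lia
  intro j
  induction j with
  | zero =>
    intro _
    exact Finset.card_pos.2 ⟨v, mem_pathEnds.2 ⟨Walk.nil, by simp, by simp⟩⟩
  | succ j ih =>
    intro hj
    -- Double counting of the pairs (end of a path, end of a one-edge extension of that path).
    have key := Finset.card_mul_le_card_mul (s := pathEnds G v j) (t := pathEnds G v (j + 1))
      (m := 2) (n := 1)
      (fun w x => ∃ p : G.Walk v w, p.IsPath ∧ p.length = j ∧ G.Adj w x ∧ x ∉ p.support) ?_ ?_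
    · have := ih (by lia)
      rw [pow_succ]
      lia
    · intro w hw
      obtain ⟨p, hp, hpl⟩ := mem_pathEnds.1 hw
      have hcard : 2 ≤ ((G.neighborFinset w).erase p.penultimate).card := by
        have h1 := Finset.pred_card_le_card_erase (s := G.neighborFinset w) (a := p.penultimate)
        have h2 := hdeg w
        rw [← card_neighborFinset_eq_degree] at h2
        lia
      refine hcard.trans (Finset.card_le_card ?_)
      intro x hx
      rw [Finset.mem_erase, mem_neighborFinset] at hx
      obtain ⟨hxp, hwx⟩ := hx
      have hxs : x ∉ p.support := by
        intro hxs
        -- The rest of `p` after `x` and the single edge `xw` are two short paths from `x` to `w`.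
        have hl : (p.dropUntil x hxs).length ≤ p.length := p.length_dropUntil_le hxs
        have heq := huniq (p.dropUntil x hxs) hwx.symm.toWalk (hp.dropUntil hxs)
          (by simp [hwx.ne']) (by simp; lia)
        apply hxp
        have hspec := p.take_spec hxs
        rw [heq] at hspec
        have : p = (p.takeUntil x hxs).concat hwx.symm := by
          conv_lhs => rw [← hspec]
          rfl
        rw [this, Walk.penultimate_concat]
      rw [Finset.mem_bipartiteAbove]
      exact ⟨mem_pathEnds.2 ⟨p.concat hwx, hp.concat hxs hwx, by simp [hpl]⟩,
        p, hp, hpl, hwx, hxs⟩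
    · intro x _
      rw [Finset.card_le_one]
      intro w hw w' hw'
      rw [Finset.mem_bipartiteBelow] at hw hw'
      obtain ⟨-, p, hp, hpl, ha, hs⟩ := hw
      obtain ⟨-, q, hq, hql, ha', hs'⟩ := hw'
      have heq := huniq _ _ (hp.concat hs ha) (hq.concat hs' ha') (by simp; lia)
      simpa using congrArg Walk.penultimate heq

theorem short_cycle_of_min_degree_three {V : Type*} [Fintype V] [DecidableEq V]
    (G : SimpleGraph V) [DecidableRel G.Adj]
    (hV : 4 ≤ Fintype.card V) (hdeg : ∀ v, 3 ≤ G.degree v) :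
    ∃ (v : V) (c : G.Walk v v), c.IsCycle ∧
      c.length ≤ 2 * Nat.clog 2 (Fintype.card V) := by
  by_contra! hG
  set k := Nat.clog 2 (Fintype.card V) with hk
  have hkpos : 0 < k := Nat.clog_pos (by norm_num) (by lia)
  have hn : Fintype.card V ≤ 2 ^ k := Nat.le_pow_clog (by norm_num) _
  obtain ⟨v⟩ : Nonempty V := Fintype.card_pos_iff.1 (by lia)
  have h := two_pow_le_card_pathEnds G hdeg k hG v k le_rfl
  have hv : v ∉ pathEnds G v k := by
    intro hv
    obtain ⟨p, hp, hpl⟩ := mem_pathEnds.1 hv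
    rw [Walk.isPath_iff_eq_nil] at hp
    subst hp
    simp at hpl
    lia
  have hlt : (pathEnds G v k).card < Fintype.card V := Finset.card_lt_univ_of_notMem hv
  lia
end

section
/- Every finite simple graph with minimum degree at least 3 and at least 16 vertices contains two edge-disjoint cycles. -/
/-!
Let `c` be a shortest cycle of `G`, of length `g`, and let `n` be the number of vertices. If `G`
has no cycle avoiding the edges of `c`, then deleting these `g` edges leaves a forest, so `G` has
at most `n - 1 + g` edges; as it has at least `3 n / 2` edges, `n ≤ 2 g - 2`. In particular
`g ≥ 9`.

On the other hand, a shortest cycle has no chord (`mem_edges_of_shortest`), so each of its vertices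
has a neighbour off the cycle, and for `g ≥ 5` these neighbours are distinct
(`unique_neighbor_of_shortest`). Hence `n ≥ 2 g` (`two_mul_length_le_card`), a contradiction.
-/

open SimpleGraph

/-- A finite acyclic graph extends to a spanning tree of the complete graph, so it has fewer
edges than vertices. -/
theorem acyclic_card_edgeFinset_lt {V : Type*} [Fintype V] [Nonempty V]
    (H : SimpleGraph V) [Fintype H.edgeSet] (hH : H.IsAcyclic) :
    H.edgeFinset.card < Fintype.card V := by
  classical
  obtain ⟨T, hHT, -, hT⟩ :=
    (connected_top (V := V)).exists_isTree_le_of_le_of_isAcyclic le_top hH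
  have h1 := hT.card_edgeFinset
  have h2 : H.edgeFinset.card ≤ T.edgeFinset.card :=
    Finset.card_le_card (edgeFinset_mono hHT)
  omega

/-- The shorter of the two arcs of a cycle between two of its vertices. -/
theorem exists_short_arc {V : Type*} [DecidableEq V] {G : SimpleGraph V} {a : V}
    {c : G.Walk a a} (hc : c.IsCycle) {u v : V} (hu : u ∈ c.support) (hv : v ∈ c.support)
    (huv : u ≠ v) :
    ∃ p : G.Walk u v, p.IsPath ∧ 2 * p.length ≤ c.length ∧ p.support ⊆ c.support ∧
      p.edges ⊆ c.edges := by
  have hr := hc.rotate hu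
  have hlen := c.length_rotate u hu
  have hedge : ∀ e, e ∈ (c.rotate u hu).edges ↔ e ∈ c.edges :=
    fun e => (c.rotate_edges u hu).mem_iff
  have hsupp : ∀ x, x ∈ (c.rotate u hu).support ↔ x ∈ c.support :=
    fun x => c.mem_support_rotate_iff u hu
  generalize c.rotate u hu = r at *
  have hv' : v ∈ r.support := (hsupp v).2 hv
  have hspec := r.take_spec hv'
  have hl : (r.takeUntil v hv').length + (r.dropUntil v hv').length = r.length := by
    rw [← Walk.length_append, hspec]
  rcases le_total (r.takeUntil v hv').length (r.dropUntil v hv').length with h | h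
  · refine ⟨r.takeUntil v hv', hr.isPath_takeUntil hv', by omega, ?_, ?_⟩
    · intro x hx
      exact (hsupp x).1 (r.support_takeUntil_subset_support hv' hx)
    · intro e he
      exact (hedge e).1 (r.edges_takeUntil_subset_edges hv' he)
  · refine ⟨(r.dropUntil v hv').reverse, ?_, by simp; omega, ?_, ?_⟩
    · refine Walk.IsPath.reverse (Walk.IsCycle.isPath_of_append_right
        (p := r.takeUntil v hv') ?_ (by rwa [hspec]))
      exact fun hn => huv hn.eq
    · intro x hx
      rw [Walk.support_reverse, List.mem_reverse] at hx
      exact (hsupp x).1 (r.support_dropUntil_subset_support hv' hx)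
    · intro e he
      rw [Walk.edges_reverse, List.mem_reverse] at he
      exact (hedge e).1 (r.edges_dropUntil_subset_edges hv' he)

theorem card_support_toFinset_of_isCycle {V : Type*} [DecidableEq V] {G : SimpleGraph V} {a : V}
    {c : G.Walk a a} (hc : c.IsCycle) : c.support.toFinset.card = c.length := by
  have h1 : c.support.toFinset = c.support.tail.toFinset := by
    ext x
    simp only [List.mem_toFinset]
    constructor
    · intro hx
      rw [Walk.mem_support_iff] at hx
      rcases hx with rfl | hx
      · exact c.end_mem_tail_support hc.not_nil
      · exact hx
    · exact List.mem_of_mem_tail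
  rw [h1, List.toFinset_card_of_nodup hc.support_nodup]
  simp

/-- A chord of a shortest cycle would close up with the shorter arc to a shorter cycle. -/
theorem mem_edges_of_shortest {V : Type*} [DecidableEq V] {G : SimpleGraph V} {a : V}
    {c : G.Walk a a} (hc : c.IsCycle) (hmin : G.girth = c.length) {u v : V}
    (hu : u ∈ c.support) (hv : v ∈ c.support) (huv : G.Adj u v) : s(u, v) ∈ c.edges := by
  by_contra hne
  obtain ⟨p, hp, hl, -, he⟩ := exists_short_arc hc hu hv huv.ne
  have hcyc : (Walk.cons huv.symm p).IsCycle := by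
    rw [Walk.cons_isCycle_iff]
    exact ⟨hp, fun h => hne (by rw [Sym2.eq_swap]; exact he h)⟩
  have := girth_le_length hcyc
  have := hc.three_le_length
  simp only [Walk.length_cons] at *
  omega

/-- Two neighbours on a shortest cycle of length at least five would close up with the shorter arc
to a shorter cycle. -/
theorem unique_neighbor_of_shortest {V : Type*} [DecidableEq V] {G : SimpleGraph V} {a : V}
    {c : G.Walk a a} (hc : c.IsCycle) (hmin : G.girth = c.length) (h5 : 5 ≤ c.length) {u v x : V}
    (hu : u ∈ c.support) (hv : v ∈ c.support) (hx : x ∉ c.support)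
    (hux : G.Adj u x) (hvx : G.Adj v x) : u = v := by
  by_contra hne
  obtain ⟨p, hp, hl, hs, -⟩ := exists_short_arc hc hu hv hne
  have hxp : x ∉ p.support := fun h => hx (hs h)
  have hcyc : (Walk.cons hux.symm (p.concat hvx)).IsCycle := by
    rw [Walk.cons_isCycle_iff]
    refine ⟨hp.concat hxp hvx, ?_⟩
    rw [Walk.edges_concat, List.concat_eq_append, List.mem_append]
    rintro (h | h)
    · exact hxp (p.fst_mem_support_of_mem_edges h)
    · simp only [List.mem_singleton, Sym2.eq_iff] at h
      rcases h with ⟨rfl, -⟩ | ⟨-, h⟩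
      · exact hvx.ne rfl
      · exact hne h
  have := girth_le_length hcyc
  simp only [Walk.length_cons, Walk.length_concat] at *
  omega

theorem exists_neighbor_off_shortest {V : Type*} [Fintype V] [DecidableEq V] {G : SimpleGraph V}
    [DecidableRel G.Adj] {a : V} {c : G.Walk a a} (hc : c.IsCycle) (hmin : G.girth = c.length)
    {u : V} (hu : u ∈ c.support) (hdeg : 3 ≤ G.degree u) : ∃ x, G.Adj u x ∧ x ∉ c.support := by
  by_contra! hall
  have h2 := hc.ncard_neighborSet_toSubgraph_eq_two hu
  have hsub : (G.neighborFinset u : Set V) ⊆ c.toSubgraph.neighborSet u := by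
    intro x hx
    have hx' : G.Adj u x := by simpa using hx
    exact Walk.adj_toSubgraph_iff_mem_edges.2 (mem_edges_of_shortest hc hmin hu (hall x hx') hx')
  have := Set.ncard_le_ncard hsub (Set.toFinite _)
  rw [Set.ncard_coe_finset, card_neighborFinset_eq_degree] at this
  omega

/-- Each vertex of a shortest cycle has a private neighbour off the cycle. -/
theorem two_mul_length_le_card {V : Type*} [Fintype V] [DecidableEq V] {G : SimpleGraph V}
    [DecidableRel G.Adj] {a : V} {c : G.Walk a a} (hc : c.IsCycle) (hmin : G.girth = c.length)
    (h5 : 5 ≤ c.length) (hdeg : ∀ v, 3 ≤ G.degree v) : 2 * c.length ≤ Fintype.card V := by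
  choose! f hf using
    fun u (hu : u ∈ c.support) => exists_neighbor_off_shortest hc hmin hu (hdeg u)
  have hinj : Set.InjOn f (c.support.toFinset : Set V) := by
    intro u hu v hv huv
    have hu' : u ∈ c.support := by simpa using hu
    have hv' : v ∈ c.support := by simpa using hv
    exact unique_neighbor_of_shortest hc hmin h5 hu' hv' (hf u hu').2 (hf u hu').1
      (huv ▸ (hf v hv').1)
  have hdisj : Disjoint c.support.toFinset (c.support.toFinset.image f) := by
    rw [Finset.disjoint_right]
    intro x hx
    obtain ⟨u, hu, rfl⟩ := Finset.mem_image.1 hx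
    simpa using (hf u (by simpa using hu)).2
  have h := Finset.card_le_univ (c.support.toFinset ∪ c.support.toFinset.image f)
  rw [Finset.card_union_of_disjoint hdisj, Finset.card_image_of_injOn hinj,
    card_support_toFinset_of_isCycle hc] at h
  omega

theorem two_edge_disjoint_cycles_of_min_degree_three {V : Type*} [Fintype V] [DecidableEq V]
    (G : SimpleGraph V) [DecidableRel G.Adj]
    (hV : 16 ≤ Fintype.card V) (hdeg : ∀ v, 3 ≤ G.degree v) :
    ∃ (u v : V) (c₁ : G.Walk u u) (c₂ : G.Walk v v),
      c₁.IsCycle ∧ c₂.IsCycle ∧ ∀ e, e ∈ c₁.edges → e ∉ c₂.edges := by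
  have : Nonempty V := Fintype.card_pos_iff.1 (by omega)
  have hE : 3 * Fintype.card V ≤ 2 * G.edgeFinset.card := by
    rw [← G.sum_degrees_eq_twice_card_edges, mul_comm, ← smul_eq_mul]
    exact Finset.card_nsmul_le_sum _ _ _ fun v _ => hdeg v
  have hG : ¬ G.IsAcyclic := fun h => by
    have := acyclic_card_edgeFinset_lt G h
    omega
  obtain ⟨a, c, hc, hmin⟩ := exists_girth_eq_length.2 hG
  by_cases hH : (G.deleteEdges (c.edges.toFinset : Set (Sym2 V))).IsAcyclic
  · exfalso
    have h1 := acyclic_card_edgeFinset_lt _ hH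
    rw [edgeFinset_deleteEdges] at h1
    have h2 := Finset.le_card_sdiff c.edges.toFinset G.edgeFinset
    have h3 := c.edges.toFinset_card_le
    rw [Walk.length_edges] at h3
    have := two_mul_length_le_card hc hmin (by omega) hdeg
    omega
  · rw [IsAcyclic] at hH
    push Not at hH
    obtain ⟨b, d, hd⟩ := hH
    refine ⟨a, b, c, d.mapLe (deleteEdges_le _), hc, hd.mapLe _, fun e he hed => ?_⟩
    rw [Walk.edges_mapLe_eq_edges] at hed
    have := d.edges_subset_edgeSet hed
    rw [edgeSet_deleteEdges] at this
    exact this.2 (by simpa using he)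
end
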